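/- arXiv:0806.1566 — 4 statements merged into one kernel-verified Lean document; each statement's English description precedes it below -/
import Mathlib

section
/- The ℤ-algebra homomorphism φ : ℤ[m,n,p]/(p² − mn − m − n − 1) → ℤ[r,s] determined by m ↦ r² − 1, n ↦ s² − 1, p ↦ rs is well defined and injective, and its image is exactly the even part E of ℤ[r,s]. (That is, the representation ring R[SO(4)] is isomorphic to ℤ[m,n,p]/(p² − mn − m − n − 1).) -/
/-!
Write `F : ℤ[m,n,p] → ℤ[r,s]` for the substitution `m ↦ r² − 1`, `n ↦ s² − 1`, `p ↦ rs`; it kills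
`p² − mn − m − n − 1 = p² − (m+1)(n+1)`, hence descends to the quotient.

Injectivity: modulo the relation every polynomial has a normal form `a + p b` with
`a, b ∈ ℤ[m,n]` (`exists_normal_form`). If `F` kills it, then
`a(r²−1, s²−1) + rs b(r²−1, s²−1) = 0`, and the substitution `r ↦ −r` turns this into the same
equation with the opposite sign in front of `rs`. So both summands vanish, and `a = b = 0` because
`m ↦ r² − 1`, `n ↦ s² − 1` is injective on `ℤ[m,n]` (`psi_injective`: it is a translation
followed by the expansion `X ↦ X²`).

Image: the even part is stable under multiplication by `r² − 1`, `s² − 1` and `rs`, so it contains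
the image; conversely `r^i s^j` with `i + j` even is `(m+1)^a (n+1)^b` or `(m+1)^a (n+1)^b p`
under `F`.
-/

/-!
Statement 8: the `ℤ`-algebra homomorphism
`φ : ℤ[m,n,p]/(p² − mn − m − n − 1) → ℤ[r,s]` with `m ↦ r²−1`, `n ↦ s²−1`, `p ↦ rs`
is well defined and injective, with image exactly the even part `E` of `ℤ[r,s]`
(so `R[SO(4)] ≅ ℤ[m,n,p]/(p² − mn − m − n − 1)`).
-/

noncomputable section

open MvPolynomial

/-- `ℤ[r,s]`, the representation ring of `SU(2) × SU(2)`. -/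
abbrev P2 : Type := MvPolynomial (Fin 2) ℤ

/-- `r`, the first fundamental character. -/
def r : P2 := X 0

/-- `s`, the second fundamental character. -/
def s : P2 := X 1

/-- `ℤ[m,n,p]`. -/
abbrev P3 : Type := MvPolynomial (Fin 3) ℤ

/-- The ideal `(p² − mn − m − n − 1)` of `ℤ[m,n,p]`. -/
def relIdeal : Ideal P3 :=
  Ideal.span {(X 2 : P3) ^ 2 - X 0 * X 1 - X 0 - X 1 - 1}

/-- The quotient ring `ℤ[m,n,p]/(p² − mn − m − n − 1)`. -/
abbrev Q3 : Type := P3 ⧸ relIdeal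

/-- The even part `E` of `ℤ[r,s]`: the `ℤ`-span of the monomials `r^i s^j` with `i + j`
even; it is the representation ring `R[SO(4)]`. -/
def evenPart : Submodule ℤ P2 :=
  Submodule.span ℤ {q | ∃ i j : ℕ, Even (i + j) ∧ q = r ^ i * s ^ j}

/-- The substitution `m ↦ r² − 1`, `n ↦ s² − 1`, `p ↦ rs` on `ℤ[m,n,p]`. -/
def subst : P3 →ₐ[ℤ] P2 := aeval ![r ^ 2 - 1, s ^ 2 - 1, r * s]

/-- The inclusion `ℤ[m,n] → ℤ[m,n,p]`; here `P2` plays the role of `ℤ[m,n]`. -/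
def incl : P2 →ₐ[ℤ] P3 := aeval ![X 0, X 1]

/-- The restriction of `subst` to `ℤ[m,n]`: `m ↦ r² − 1`, `n ↦ s² − 1`. -/
def psi : P2 →ₐ[ℤ] P2 := aeval ![r ^ 2 - 1, s ^ 2 - 1]

/-- The involution `r ↦ −r`, `s ↦ s` of `ℤ[r,s]`. -/
def negR : P2 →ₐ[ℤ] P2 := aeval ![-r, s]

@[simp] lemma subst_X0 : subst (X 0) = r ^ 2 - 1 := by simp [subst]

@[simp] lemma subst_X1 : subst (X 1) = s ^ 2 - 1 := by simp [subst]

@[simp] lemma subst_X2 : subst (X 2) = r * s := by simp [subst]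

@[simp] lemma negR_r : negR r = -r := by
  have h : negR (X 0) = -r := by simp [negR]
  exact h

@[simp] lemma negR_s : negR s = s := by
  have h : negR (X 1) = s := by simp [negR]
  exact h

lemma subst_incl (a : P2) : subst (incl a) = psi a := by
  have h : subst.comp incl = psi := by
    ext1 i
    fin_cases i <;> simp [incl, psi]
  exact DFunLike.congr_fun h a

lemma negR_psi (a : P2) : negR (psi a) = psi a := by
  have h : negR.comp psi = psi := by
    ext1 i
    fin_cases i <;> simp [psi]
  exact DFunLike.congr_fun h a

lemma psi_injective : Function.Injective psi := by
  have h : psi = (expand 2).comp (aeval fun i : Fin 2 => (X i - 1 : P2)) := by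
    ext1 i
    fin_cases i <;> simp [psi, r, s]
  have h' : (aeval fun i : Fin 2 => (X i + 1 : P2)).comp
      (aeval fun i : Fin 2 => (X i - 1 : P2)) = AlgHom.id ℤ P2 := by
    ext1 i
    simp
  intro a b hab
  rw [h, AlgHom.comp_apply, AlgHom.comp_apply] at hab
  have hab' := congrArg (aeval fun i : Fin 2 => (X i + 1 : P2)) (expand_injective two_pos hab)
  rwa [← AlgHom.comp_apply, ← AlgHom.comp_apply, h', AlgHom.id_apply, AlgHom.id_apply] at hab'

lemma subst_relIdeal {q : P3} (hq : q ∈ relIdeal) : subst q = 0 := by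
  have h : relIdeal ≤ RingHom.ker subst := by
    rw [relIdeal, Ideal.span_le, Set.singleton_subset_iff, SetLike.mem_coe, RingHom.mem_ker]
    simp only [map_sub, map_mul, map_pow, map_one, subst_X0, subst_X1, subst_X2]
    ring
  exact h hq

/-- Modulo the relation, every element of `ℤ[m,n,p]` has degree at most one in `p`. -/
lemma exists_normal_form (q : P3) :
    ∃ a b : P2, q - (incl a + X 2 * incl b) ∈ relIdeal := by
  have i0 : incl (X 0) = X 0 := by simp [incl]
  have i1 : incl (X 1) = X 1 := by simp [incl]
  induction q using MvPolynomial.induction_on with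
  | C c =>
    refine ⟨C c, 0, ?_⟩
    simp [incl]
  | add f g hf hg =>
    obtain ⟨a, b, h⟩ := hf
    obtain ⟨a', b', h'⟩ := hg
    refine ⟨a + a', b + b', ?_⟩
    convert add_mem h h' using 1
    simp only [map_add]
    ring
  | mul_X f i hf =>
    obtain ⟨a, b, h⟩ := hf
    have hi := relIdeal.mul_mem_right (X i) h
    fin_cases i
    · refine ⟨a * X 0, b * X 0, ?_⟩
      convert hi using 1
      simp only [map_mul, i0, Fin.zero_eta]
      ring
    · refine ⟨a * X 1, b * X 1, ?_⟩
      convert hi using 1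
      simp only [map_mul, i1, Fin.mk_one]
      ring
    -- `p (a + p b) ≡ (m n + m + n + 1) b + p a`
    · refine ⟨(X 0 * X 1 + X 0 + X 1 + 1) * b, a, ?_⟩
      have hrel : (X 2 : P3) ^ 2 - X 0 * X 1 - X 0 - X 1 - 1 ∈ relIdeal :=
        Ideal.subset_span rfl
      convert add_mem hi (relIdeal.mul_mem_right (incl b) hrel) using 1
      simp only [map_mul, map_add, map_one, i0, i1, Fin.reduceFinMk]
      ring

lemma mem_relIdeal_of_subst_eq_zero {q : P3} (hq : subst q = 0) : q ∈ relIdeal := by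
  obtain ⟨a, b, h⟩ := exists_normal_form q
  have h1 : psi a + r * s * psi b = 0 := by
    have := subst_relIdeal h
    rw [map_sub, hq, zero_sub, neg_eq_zero] at this
    simpa [subst_incl] using this
  have h2 : psi a - r * s * psi b = 0 := by
    have := congrArg negR h1
    simp only [map_add, map_mul, negR_psi, negR_r, negR_s, map_zero] at this
    linear_combination this
  have h3 : 2 * psi a = 0 := by linear_combination h1 + h2
  have ha : psi a = 0 := (mul_eq_zero.mp h3).resolve_left two_ne_zero
  have hrs : r * s ≠ 0 := mul_ne_zero (X_ne_zero 0) (X_ne_zero 1)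
  have hb : psi b = 0 := by
    rw [ha, zero_add] at h1
    exact (mul_eq_zero.mp h1).resolve_left hrs
  rw [(map_eq_zero_iff psi psi_injective).mp ha, (map_eq_zero_iff psi psi_injective).mp hb] at h
  simpa using h

lemma mul_monomial_mem_evenPart {k l : ℕ} (hkl : Even (k + l)) {e : P2} (he : e ∈ evenPart) :
    e * (r ^ k * s ^ l) ∈ evenPart := by
  induction he using Submodule.span_induction with
  | mem x hx =>
    obtain ⟨i, j, hij, rfl⟩ := hx
    refine Submodule.subset_span ⟨i + k, j + l, ?_, by ring⟩
    rw [add_add_add_comm]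
    exact hij.add hkl
  | zero => simp
  | add x y _ _ hx hy =>
    rw [add_mul]
    exact add_mem hx hy
  | smul c x _ hx =>
    rw [smul_mul_assoc]
    exact Submodule.smul_mem _ c hx

lemma subst_mem_evenPart (q : P3) : subst q ∈ evenPart := by
  induction q using MvPolynomial.induction_on with
  | C c =>
    have h : subst (C c) = c • (1 : P2) := by simp [subst]
    rw [h]
    exact Submodule.smul_mem _ c (Submodule.subset_span ⟨0, 0, by simp, by simp⟩)
  | add f g hf hg =>
    rw [map_add]
    exact add_mem hf hg
  | mul_X f i hf =>
    rw [map_mul]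
    fin_cases i
    · convert sub_mem (mul_monomial_mem_evenPart (k := 2) (l := 0) (by decide) hf) hf using 1
      simp only [Fin.zero_eta, subst_X0]
      ring
    · convert sub_mem (mul_monomial_mem_evenPart (k := 0) (l := 2) (by decide) hf) hf using 1
      simp only [Fin.mk_one, subst_X1]
      ring
    · convert mul_monomial_mem_evenPart (k := 1) (l := 1) (by decide) hf using 1
      simp only [Fin.reduceFinMk, subst_X2]
      ring

lemma exists_subst_eq {e : P2} (he : e ∈ evenPart) : ∃ q, subst q = e := by
  have h : evenPart ≤ LinearMap.range subst.toLinearMap := by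
    rw [evenPart, Submodule.span_le]
    rintro _ ⟨i, j, hij, rfl⟩
    rcases Nat.even_or_odd i with hi | hi
    · obtain ⟨b, rfl⟩ := (Nat.even_add.mp hij).mp hi
      obtain ⟨a, rfl⟩ := hi
      refine ⟨(X 0 + 1) ^ a * (X 1 + 1) ^ b, ?_⟩
      simp [← two_mul, pow_mul]
    · obtain ⟨b, rfl⟩ := (Nat.even_add'.mp hij).mp hi
      obtain ⟨a, rfl⟩ := hi
      refine ⟨(X 0 + 1) ^ a * (X 1 + 1) ^ b * X 2, ?_⟩
      simp [pow_succ, pow_mul]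
      ring
  exact h he

/-- **`R[SO(4)] ≅ ℤ[m,n,p]/(p² − mn − m − n − 1)`**: there is a (necessarily unique) ring
homomorphism `φ` on the quotient ring `ℤ[m,n,p]/(p² − mn − m − n − 1)` induced by
`m ↦ r²−1`, `n ↦ s²−1`, `p ↦ rs` (well-definedness), and `φ` is injective with image
exactly the even part `E` of `ℤ[r,s]`. -/
theorem SO4_presentation :
    ∃ φ : Q3 →+* P2,
      (∀ q : P3, φ (Ideal.Quotient.mk relIdeal q)
          = MvPolynomial.aeval ![r ^ 2 - 1, s ^ 2 - 1, r * s] q) ∧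
      Function.Injective φ ∧
      Set.range φ = (evenPart : Set P2) := by
  refine ⟨Ideal.Quotient.lift relIdeal subst.toRingHom fun q hq => subst_relIdeal hq,
    fun q => rfl, ?_, ?_⟩
  · rw [injective_iff_map_eq_zero]
    intro x hx
    obtain ⟨q, rfl⟩ := Ideal.Quotient.mk_surjective x
    exact Ideal.Quotient.eq_zero_iff_mem.mpr (mem_relIdeal_of_subst_eq_zero hx)
  · ext e
    constructor
    · rintro ⟨x, rfl⟩
      obtain ⟨q, rfl⟩ := Ideal.Quotient.mk_surjective x
      exact subst_mem_evenPart q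
    · intro he
      obtain ⟨q, rfl⟩ := exists_subst_eq he
      exact ⟨Ideal.Quotient.mk relIdeal q, rfl⟩

end
end

section
/- The even part E of ℤ[r,s] is a free module over the subring ℤ[a,b] with basis {1, rs, s²−1}. (This is the statement that R[SO(4)] is a free R[G₂]-module of rank 3 with basis the irreducible characters 1, p, n of highest weights (0,0), (1,−1), (0,−1).) -/
/-!
Write `p = rs` and `n = s² − 1`.

*Spanning.* The ring `E` is generated by `r²`, `rs`, `s²`, and `r² = a + 1 − p`, `s² = n + 1`.
The definition of `b` and the identity `p² = r²s²` express `p²` and `pn`, hence also `n²`, as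
`ℤ[a,b]`-combinations of `1, p, n`, so these combinations are stable under multiplication by
the generators (`isComb_of_mem_evenPart`).

*Independence.* Put `r = x + x⁻¹`, `s = y + y⁻¹` with `(x, y) = (t², q²)`. An element of order
three in the Weyl group of `G₂` carries this torus point to two others, given by
`(tq, t³/q)` and `(t/q, t³q)`, at which `a` and `b`, and so all elements of `ℤ[a,b]`, take the
same values. A relation `c₀ + c₁p + c₂n = 0` evaluated at the three points is thus a square
linear system for the values of the `cᵢ`; its determinant is the Weyl denominator of `G₂`, the
product of `z − z⁻¹` over `z = tq, t/q, t², q², t³/q, t³q`. It is nonzero for `1 < t < 2` and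
`q > 8`, where consequently every `cᵢ` vanishes (`evalAt_eq_zero`). These points fill a product
of two infinite sets of values of `r` and `s`, which forces `cᵢ = 0` (`coeff_eq_zero`).
-/


/-!
Statement 9: the even part `E` of `ℤ[r,s]` is a free module over the subring `ℤ[a,b]`
with basis `{1, rs, s²−1}` (i.e. `R[SO(4)]` is a free `R[G₂]`-module of rank 3 with basis
the irreducible characters of highest weights `(0,0)`, `(1,−1)`, `(0,−1)`).
-/

noncomputable section

open MvPolynomial

/-- `a = rs + r² − 1`, the restriction to `SO(4)` of the first fundamental character
of `G₂`. -/
def a : P2 := r * s + r ^ 2 - 1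

/-- `b = r³s − 2rs + r² + s² − 2`, the restriction to `SO(4)` of the second fundamental
character of `G₂`. -/
def b : P2 := r ^ 3 * s - 2 * (r * s) + r ^ 2 + s ^ 2 - 2

/-- The subring `ℤ[a,b] ⊆ ℤ[r,s]`, the image of `R[G₂]` in `R[SO(4)]`. -/
def Zab : Subalgebra ℤ P2 := Algebra.adjoin ℤ {a, b}

/-! ### Linear independence -/

/-- Evaluation of a polynomial in `r, s` at a rational point. -/
def evalAt (x y : ℚ) : P2 →ₐ[ℤ] ℚ := aeval ![x, y]

lemma evalAt_r (x y : ℚ) : evalAt x y r = x := by simp [evalAt, r]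

lemma evalAt_s (x y : ℚ) : evalAt x y s = y := by simp [evalAt, s]

lemma evalAt_eq_of_mem_Zab {x y x' y' : ℚ} (ha : evalAt x y a = evalAt x' y' a)
    (hb : evalAt x y b = evalAt x' y' b) {c : P2} (hc : c ∈ Zab) :
    evalAt x y c = evalAt x' y' c := by
  have h : Set.EqOn (evalAt x y) (evalAt x' y') {a, b} := by
    rintro z (rfl | rfl)
    · exact ha
    · exact hb
  exact AlgHom.eqOn_adjoin_iff.2 h hc

set_option maxHeartbeats 1000000 in
/-- At the torus point with parameters `t, q`, the restrictions of the linear relation to the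
three conjugate points form a square system in the values of the coefficients, whose
determinant is the Weyl denominator of `G₂`, and it is nonzero in the given range of `t, q`. -/
lemma evalAt_eq_zero {c : Fin 3 → P2} (hc : ∀ i, c i ∈ Zab)
    (h : c 0 * 1 + c 1 * (r * s) + c 2 * (s ^ 2 - 1) = 0) {t q : ℚ}
    (ht : 1 < t) (ht2 : t < 2) (hq : 8 < q) (i : Fin 3) :
    evalAt (t ^ 2 + (t ^ 2)⁻¹) (q ^ 2 + (q ^ 2)⁻¹) (c i) = 0 := by
  have t0 : t ≠ 0 := by positivity
  have q0 : q ≠ 0 := by positivity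
  -- The two other points of the orbit under the order-three element of the Weyl group.
  have e2 : ∀ j, evalAt (t ^ 2 + (t ^ 2)⁻¹) (q ^ 2 + (q ^ 2)⁻¹) (c j) =
      evalAt (t * q + (t * q)⁻¹) (t ^ 3 / q + q / t ^ 3) (c j) := fun j => by
    refine evalAt_eq_of_mem_Zab ?_ ?_ (hc j)
    · simp only [a, map_add, map_sub, map_mul, map_pow, map_one, evalAt_r, evalAt_s]
      field_simp
      ring
    · simp only [b, map_add, map_sub, map_mul, map_pow, map_ofNat, evalAt_r, evalAt_s]
      field_simp
      ring
  have e3 : ∀ j, evalAt (t ^ 2 + (t ^ 2)⁻¹) (q ^ 2 + (q ^ 2)⁻¹) (c j) =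
      evalAt (t / q + q / t) (t ^ 3 * q + (t ^ 3 * q)⁻¹) (c j) := fun j => by
    refine evalAt_eq_of_mem_Zab ?_ ?_ (hc j)
    · simp only [a, map_add, map_sub, map_mul, map_pow, map_one, evalAt_r, evalAt_s]
      field_simp
      ring
    · simp only [b, map_add, map_sub, map_mul, map_pow, map_ofNat, evalAt_r, evalAt_s]
      field_simp
      ring
  have h1 := congrArg (evalAt (t ^ 2 + (t ^ 2)⁻¹) (q ^ 2 + (q ^ 2)⁻¹)) h
  have h2 := congrArg (evalAt (t * q + (t * q)⁻¹) (t ^ 3 / q + q / t ^ 3)) h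
  have h3 := congrArg (evalAt (t / q + q / t) (t ^ 3 * q + (t ^ 3 * q)⁻¹)) h
  simp only [map_add, map_sub, map_mul, map_pow, map_one, map_zero, evalAt_r, evalAt_s,
    ← e2] at h1 h2
  simp only [map_add, map_sub, map_mul, map_pow, map_one, map_zero, evalAt_r, evalAt_s,
    ← e3] at h3
  generalize hp1 : (t ^ 2 + (t ^ 2)⁻¹) * (q ^ 2 + (q ^ 2)⁻¹) = p1 at h1
  generalize hp2 : (t * q + (t * q)⁻¹) * (t ^ 3 / q + q / t ^ 3) = p2 at h2
  generalize hp3 : (t / q + q / t) * (t ^ 3 * q + (t ^ 3 * q)⁻¹) = p3 at h3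
  generalize hn1 : (q ^ 2 + (q ^ 2)⁻¹) ^ 2 - 1 = n1 at h1
  generalize hn2 : (t ^ 3 / q + q / t ^ 3) ^ 2 - 1 = n2 at h2
  generalize hn3 : (t ^ 3 * q + (t ^ 3 * q)⁻¹) ^ 2 - 1 = n3 at h3
  have hD : (p1 - p2) * (n1 - n3) - (p1 - p3) * (n1 - n2) =
      (t * q - (t * q)⁻¹) * (t / q - q / t) * (t ^ 2 - (t ^ 2)⁻¹) *
      (q ^ 2 - (q ^ 2)⁻¹) * (t ^ 3 / q - q / t ^ 3) * (t ^ 3 * q - (t ^ 3 * q)⁻¹) := by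
    subst hp1 hp2 hp3 hn1 hn2 hn3
    field_simp
    ring
  have key : ∀ z : ℚ, 1 < z → z - z⁻¹ ≠ 0 := fun z hz => by
    have := inv_lt_one_of_one_lt₀ hz
    linarith
  have key' : ∀ y z : ℚ, 0 < y → y < z → y / z - z / y ≠ 0 := fun y z hy hz => by
    have h1 : y / z < 1 := (div_lt_one (hy.trans hz)).2 hz
    have h2 : 1 < z / y := (one_lt_div hy).2 hz
    linarith
  have t3 : t ^ 3 < q := by
    have : t ^ 3 < 2 ^ 3 := by gcongr
    linarith
  have t31 : 1 < t ^ 3 := one_lt_pow₀ ht (by norm_num)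
  have D0 : (p1 - p2) * (n1 - n3) - (p1 - p3) * (n1 - n2) ≠ 0 := by
    rw [hD]
    refine mul_ne_zero (mul_ne_zero (mul_ne_zero (mul_ne_zero (mul_ne_zero ?_ ?_) ?_) ?_) ?_) ?_
    · exact key _ (by nlinarith)
    · exact key' _ _ (by linarith) (by linarith)
    · exact key _ (by nlinarith)
    · exact key _ (by nlinarith)
    · exact key' _ _ (by positivity) t3
    · exact key _ (by nlinarith)
  generalize evalAt (t ^ 2 + (t ^ 2)⁻¹) (q ^ 2 + (q ^ 2)⁻¹) = φ at *
  have z1 : φ (c 1) = 0 := by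
    refine (mul_eq_zero.1 ?_).resolve_left D0
    linear_combination (n1 - n3) * (h1 - h2) - (n1 - n2) * (h1 - h3)
  have z2 : φ (c 2) = 0 := by
    refine (mul_eq_zero.1 ?_).resolve_left D0
    linear_combination (p1 - p2) * (h1 - h3) - (p1 - p3) * (h1 - h2)
  have z0 : φ (c 0) = 0 := by
    rw [z1, z2] at h1
    linarith
  fin_cases i
  exacts [z0, z1, z2]

lemma infinite_image {S : Set ℚ} (hS : S.Infinite) (h1 : ∀ x ∈ S, 1 < x) :
    ((fun x : ℚ => x ^ 2 + (x ^ 2)⁻¹) '' S).Infinite := by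
  refine hS.image fun x hx y hy hxy => ?_
  have hx1 := h1 x hx
  have hy1 := h1 y hy
  have x0 : x ≠ 0 := by positivity
  have y0 : y ≠ 0 := by positivity
  have e : (x - y) * ((x + y) * (x ^ 2 * y ^ 2 - 1)) = 0 := by
    field_simp at hxy
    linear_combination hxy
  have hxy1 : 1 < x * y := by nlinarith
  have : (x + y) * (x ^ 2 * y ^ 2 - 1) ≠ 0 := by
    refine mul_ne_zero (by linarith) ?_
    nlinarith
  exact sub_eq_zero.1 ((mul_eq_zero.1 e).resolve_right this)

/-- `1, rs, s² − 1` are linearly independent over `ℤ[a,b]`. -/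
lemma coeff_eq_zero {c : Fin 3 → P2} (hc : ∀ i, c i ∈ Zab)
    (h : c 0 * 1 + c 1 * (r * s) + c 2 * (s ^ 2 - 1) = 0) (i : Fin 3) : c i = 0 := by
  have inj : Function.Injective (MvPolynomial.map (σ := Fin 2) (Int.castRingHom ℚ)) :=
    MvPolynomial.map_injective _ Int.cast_injective
  apply inj
  rw [map_zero]
  refine MvPolynomial.funext_set
    ![(fun x : ℚ => x ^ 2 + (x ^ 2)⁻¹) '' Set.Ioo 1 2,
      (fun x : ℚ => x ^ 2 + (x ^ 2)⁻¹) '' Set.Ioi 8] ?_ ?_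
  · intro j
    fin_cases j
    · exact infinite_image (Set.Ioo_infinite (by norm_num)) fun x hx => hx.1
    · exact infinite_image (Set.Ioi_infinite _) fun x hx => by
        have : (8 : ℚ) < x := hx
        linarith
  · intro x hx
    obtain ⟨t, ht, hxt⟩ := hx 0 (Set.mem_univ _)
    obtain ⟨q, hq, hxq⟩ := hx 1 (Set.mem_univ _)
    have hx' : x = ![t ^ 2 + (t ^ 2)⁻¹, q ^ 2 + (q ^ 2)⁻¹] := by
      ext j
      fin_cases j
      exacts [hxt.symm, hxq.symm]
    have := evalAt_eq_zero hc h ht.1 ht.2 hq i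
    rw [evalAt, ← hx', aeval_def] at this
    rw [eval_map, map_zero]
    exact this

/-! ### Spanning -/

/-- The property of being a `ℤ[a,b]`-linear combination of `1, rs, s² − 1`. -/
def IsComb (f : P2) : Prop :=
  ∃ c : Fin 3 → P2, (∀ i, c i ∈ Zab) ∧ f = c 0 * 1 + c 1 * (r * s) + c 2 * (s ^ 2 - 1)

lemma a_mem : a ∈ Zab := Algebra.subset_adjoin (by simp)

lemma b_mem : b ∈ Zab := Algebra.subset_adjoin (by simp)

lemma IsComb.mk {f : P2} (x y z : P2) (hx : x ∈ Zab) (hy : y ∈ Zab) (hz : z ∈ Zab)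
    (h : f = x * 1 + y * (r * s) + z * (s ^ 2 - 1)) : IsComb f := by
  refine ⟨![x, y, z], fun i => ?_, by simpa using h⟩
  fin_cases i
  exacts [hx, hy, hz]

lemma IsComb.add {f g : P2} (hf : IsComb f) (hg : IsComb g) : IsComb (f + g) := by
  obtain ⟨c, hc, rfl⟩ := hf
  obtain ⟨d, hd, rfl⟩ := hg
  exact ⟨c + d, fun i => add_mem (hc i) (hd i), by simp only [Pi.add_apply]; ring⟩

lemma IsComb.coeff_mul {f x : P2} (hf : IsComb f) (hx : x ∈ Zab) : IsComb (x * f) := by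
  obtain ⟨c, hc, rfl⟩ := hf
  exact ⟨fun i => x * c i, fun i => mul_mem hx (hc i), by ring⟩

/-- The relation `p² = (a − b) + (a − 2)p + n`, for `p = rs` and `n = s² − 1`. -/
lemma isComb_pp : IsComb ((r * s) * (r * s)) :=
  .mk (a - b) (a - 2) 1 (sub_mem a_mem b_mem) (sub_mem a_mem (ofNat_mem _ 2)) (one_mem _)
    (by simp only [a, b]; ring)

/-- The relation `pn = (1 + b) + (1 − a)p + an`, for `p = rs` and `n = s² − 1`. -/
lemma isComb_pn : IsComb ((r * s) * (s ^ 2 - 1)) :=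
  .mk (1 + b) (1 - a) a (add_mem (one_mem _) b_mem) (sub_mem (one_mem _) a_mem) a_mem
    (by simp only [a, b]; ring)

/-- The relation for `n²` results from the other two by computing `p²n` in two ways. -/
lemma isComb_nn : IsComb ((s ^ 2 - 1) * (s ^ 2 - 1)) := by
  have h1 := isComb_pn.coeff_mul (ofNat_mem Zab 2)
  have h2 := isComb_pp.coeff_mul (sub_mem (one_mem Zab) a_mem)
  have h3 : IsComb ((1 + b) * (r * s) + (b - a) * (s ^ 2 - 1)) :=
    .mk 0 (1 + b) (b - a) (zero_mem _) (add_mem (one_mem _) b_mem) (sub_mem b_mem a_mem)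
      (by ring)
  convert (h1.add h2).add h3 using 1
  simp only [a, b]
  ring

lemma IsComb.mul_p {f : P2} (hf : IsComb f) : IsComb (f * (r * s)) := by
  obtain ⟨c, hc, rfl⟩ := hf
  have h0 : IsComb (c 0 * (r * s)) :=
    .mk 0 (c 0) 0 (zero_mem _) (hc 0) (zero_mem _) (by ring)
  convert (h0.add (isComb_pp.coeff_mul (hc 1))).add (isComb_pn.coeff_mul (hc 2)) using 1
  ring

lemma IsComb.mul_ss {f : P2} (hf : IsComb f) : IsComb (f * s ^ 2) := by
  have hf' := hf
  obtain ⟨c, hc, rfl⟩ := hf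
  have h0 : IsComb (c 0 * (s ^ 2 - 1)) :=
    .mk 0 0 (c 0) (zero_mem _) (zero_mem _) (hc 0) (by ring)
  convert ((h0.add (isComb_pn.coeff_mul (hc 1))).add (isComb_nn.coeff_mul (hc 2))).add hf' using 1
  ring

lemma IsComb.mul_rr {f : P2} (hf : IsComb f) : IsComb (f * r ^ 2) := by
  -- `r² = (a + 1) − rs`
  convert (hf.coeff_mul (add_mem a_mem (one_mem Zab))).add
    (hf.mul_p.coeff_mul (neg_mem (one_mem Zab))) using 1
  simp only [a]
  ring

lemma isComb_one : IsComb 1 :=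
  .mk 1 0 0 (one_mem _) (zero_mem _) (zero_mem _) (by ring)

/-- Even monomials are products of `r²`, `s²` and `rs`. -/
lemma isComb_monomial (n : ℕ) : ∀ i j : ℕ, i + j = 2 * n → IsComb (r ^ i * s ^ j) := by
  induction n with
  | zero =>
    intro i j h
    obtain ⟨rfl, rfl⟩ : i = 0 ∧ j = 0 := by omega
    simpa using isComb_one
  | succ n ih =>
    intro i j h
    obtain hi | ⟨rfl, hj⟩ | ⟨hi, hj⟩ : 2 ≤ i ∨ (i = 0 ∧ 2 ≤ j) ∨ (i = 1 ∧ 1 ≤ j) := by omega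
    · obtain ⟨k, rfl⟩ := Nat.exists_eq_add_of_le hi
      convert (ih k j (by omega)).mul_rr using 1
      ring
    · obtain ⟨k, rfl⟩ := Nat.exists_eq_add_of_le hj
      convert (ih 0 k (by omega)).mul_ss using 1
      ring
    · subst hi
      obtain ⟨k, rfl⟩ := Nat.exists_eq_add_of_le hj
      convert (ih 0 k (by omega)).mul_p using 1
      ring

lemma isComb_of_mem_evenPart {f : P2} (hf : f ∈ evenPart) : IsComb f := by
  induction hf using Submodule.span_induction with
  | mem x hx =>
    obtain ⟨i, j, ⟨n, hn⟩, rfl⟩ := hx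
    exact isComb_monomial n i j (by omega)
  | zero => simpa using isComb_one.coeff_mul (zero_mem Zab)
  | add x y _ _ hx hy => exact hx.add hy
  | smul z x _ hx =>
    rw [zsmul_eq_mul]
    exact hx.coeff_mul (intCast_mem Zab z)

/-- **`R[SO(4)]` is a free `R[G₂]`-module of rank 3** with basis `{1, rs, s²−1}`: the
basis lies in `E`, and every `f ∈ E` is, in a unique way, a `ℤ[a,b]`-linear combination
`f = c₀·1 + c₁·rs + c₂·(s²−1)`. -/
theorem evenPart_free_over_Zab :
    ((1 : P2) ∈ evenPart ∧ r * s ∈ evenPart ∧ s ^ 2 - 1 ∈ evenPart) ∧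
    ∀ f ∈ evenPart, ∃! c : Fin 3 → P2,
      (∀ i, c i ∈ Zab) ∧ f = c 0 * 1 + c 1 * (r * s) + c 2 * (s ^ 2 - 1) := by
  refine ⟨⟨?_, ?_, ?_⟩, fun f hf => ?_⟩
  · exact Submodule.subset_span ⟨0, 0, by simp, by simp⟩
  · exact Submodule.subset_span ⟨1, 1, by decide, by simp⟩
  · exact sub_mem (Submodule.subset_span ⟨0, 2, by decide, by simp⟩)
      (Submodule.subset_span ⟨0, 0, by simp, by simp⟩)
  · obtain ⟨c, hc, hfc⟩ := isComb_of_mem_evenPart hf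
    refine ⟨c, ⟨hc, hfc⟩, ?_⟩
    rintro d ⟨hd, hfd⟩
    funext i
    refine sub_eq_zero.1 (coeff_eq_zero (c := d - c) (fun i => sub_mem (hd i) (hc i)) ?_ i)
    simp only [Pi.sub_apply]
    linear_combination hfc - hfd

end
end

section
/- The elements a = rs + r² − 1 and b = r³s − 2rs + r² + s² − 2 of ℤ[r,s] are algebraically independent over ℤ: the ring homomorphism ℤ[x,y] → ℤ[r,s] sending x ↦ a and y ↦ b is injective. (This underlies the identification of the image of R[G₂] in R[SO(4)] with a polynomial ring ℤ[a,b] on the two fundamental characters of G₂.) -/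
/-!
The ring `ℤ[r,s]` has transcendence degree `2` over `ℤ`, so two elements over which it is
algebraic are automatically algebraically independent. It is in fact integral over `ℤ[a,b]`.
Put `c = a + 1`, so that `rs = c - r²`. Multiplying the definition of `b` by `r²` and eliminating
`rs` gives the monic equation `r⁶ - (c + 4) r⁴ + (b + 4c + 2) r² - c² = 0` (`r_equation`), so `r`
is integral; and the definition of `b`, after eliminating `rs`, expresses `s²` as a polynomial in
`r`, `a`, `b` (`s_equation`), so `s` is integral as well.
-/

noncomputable section

open MvPolynomial

theorem r_equation :
    r ^ 6 - (a + 5) * r ^ 4 + (b + 4 * a + 6) * r ^ 2 - (a + 1) ^ 2 = 0 := by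
  simp only [a, b]
  ring

theorem s_equation :
    s ^ 2 = b + 2 * a + 4 - (a + 4) * r ^ 2 + r ^ 4 := by
  simp only [a, b]
  ring

/-- `ℤ[r,s]` is integral over any subring that contains `a` and `b`. -/
theorem isIntegral_of_mem (S : Subalgebra ℤ P2) (ha : a ∈ S) (hb : b ∈ S) :
    Algebra.IsIntegral S P2 := by
  have hr : IsIntegral S r := by
    let p : Polynomial S := Polynomial.X ^ 6 +
      (-Polynomial.C (⟨a, ha⟩ + 5) * Polynomial.X ^ 4 +
        Polynomial.C (⟨b, hb⟩ + 4 * ⟨a, ha⟩ + 6) * Polynomial.X ^ 2 -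
        Polynomial.C ((⟨a, ha⟩ + 1) ^ 2))
    refine ⟨p, ?_, ?_⟩
    · apply Polynomial.monic_X_pow_add
      compute_degree!
    · have hca : algebraMap S P2 ⟨a, ha⟩ = a := rfl
      have hcb : algebraMap S P2 ⟨b, hb⟩ = b := rfl
      simp only [p, Polynomial.eval₂_add, Polynomial.eval₂_sub, Polynomial.eval₂_mul,
        Polynomial.eval₂_neg, Polynomial.eval₂_pow, Polynomial.eval₂_X, Polynomial.eval₂_C]
      simp only [map_add, map_mul, map_pow, map_one, map_ofNat, hca, hcb]
      linear_combination r_equation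
  have ha' : IsIntegral S a := isIntegral_algebraMap (x := (⟨a, ha⟩ : S))
  have hb' : IsIntegral S b := isIntegral_algebraMap (x := (⟨b, hb⟩ : S))
  have hn (n : ℕ) : IsIntegral S (n : P2) := by
    simpa using isIntegral_algebraMap (R := S) (A := P2) (x := (n : S))
  have hs : IsIntegral S s := by
    refine IsIntegral.of_pow (n := 2) two_pos ?_
    rw [s_equation]
    exact (((hb'.add ((hn 2).mul ha')).add (hn 4)).sub
      ((ha'.add (hn 4)).mul (hr.pow 2))).add (hr.pow 4)
  refine ⟨fun p ↦ ?_⟩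
  induction p using MvPolynomial.induction_on with
  | C n => exact isIntegral_algebraMap (x := algebraMap ℤ S n)
  | add p q hp hq => exact hp.add hq
  | mul_X p i hp =>
    refine hp.mul ?_
    fin_cases i
    · exact hr
    · exact hs

/-- **`a` and `b` are algebraically independent over `ℤ`**: the evaluation homomorphism
`ℤ[x,y] → ℤ[r,s]`, `x ↦ a`, `y ↦ b`, is injective. -/
theorem ab_algebraically_independent :
    Function.Injective (MvPolynomial.aeval (R := ℤ) ![a, b] : MvPolynomial (Fin 2) ℤ →ₐ[ℤ] P2) := by
  have hint : Algebra.IsIntegral (Algebra.adjoin ℤ (Set.range ![a, b])) P2 :=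
    isIntegral_of_mem _ (Algebra.subset_adjoin ⟨0, rfl⟩) (Algebra.subset_adjoin ⟨1, rfl⟩)
  exact (Algebra.IsAlgebraic.isTranscendenceBasis_of_le_trdeg_of_finite ℤ ![a, b]
    (by rw [MvPolynomial.trdeg_of_isDomain, Cardinal.lift_id])).1

end
end

section
/- The odd part O of ℤ[r,s] is not isomorphic to the even part E as an E-module. (This is the statement that for odd level the twisted representation module R_k[SO(4)] of the SO(4) subgroup of G₂ is genuinely twisted: it is not isomorphic to the representation ring R[SO(4)] as an R[SO(4)]-module.) -/
/-!
An `E`-linear bijection `T : E → O` makes `O` free on `g = T 1`, so `g` divides both `r` and `s`.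
Every element of `O` has zero constant term, so `g` is not a unit; as `r` is irreducible, `g` is
associated to `r`, and hence `r ∣ s`, which is absurd.
-/

/-!
Statement 13: the odd part `O` of `ℤ[r,s]` is not isomorphic to the even part `E` as an
`E`-module (the twisted representation module `R₁[SO(4)]` is genuinely twisted).
-/

noncomputable section

open MvPolynomial

/-- The odd part `O` of `ℤ[r,s]`: the `ℤ`-span of the monomials `r^i s^j` with `i + j`
odd; it is the twisted representation module `R₁[SO(4)]`. -/
def oddPart : Submodule ℤ P2 :=
  Submodule.span ℤ {q | ∃ i j : ℕ, Odd (i + j) ∧ q = r ^ i * s ^ j}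

/-- Odd elements have no constant term; in particular they are never units. -/
theorem constantCoeff_eq_zero_of_mem_oddPart {g : P2} (hg : g ∈ oddPart) :
    constantCoeff g = 0 := by
  unfold oddPart at hg
  induction hg using Submodule.span_induction with
  | mem x hx =>
    obtain ⟨i, j, hij, rfl⟩ := hx
    rcases Nat.eq_zero_or_pos i with rfl | hi
    · have hj : j ≠ 0 := by rintro rfl; simp at hij
      simp [r, s, hj]
    · simp [r, s, hi.ne']
  | zero => simp
  | add x y _ _ hx hy => simp [hx, hy]
  | smul a x _ hx => simp [hx]

/-- **`O` is not isomorphic to `E` as an `E`-module**: there is no bijection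
`T : E → O` which is additive and `E`-linear (`T(e·x) = e·T(x)`, the `E`-action on both
sides being multiplication in `ℤ[r,s]`).  That is, for odd levels the twisted
representation module `R_k[SO(4)]` is not isomorphic to `R[SO(4)]` as an
`R[SO(4)]`-module. -/
theorem oddPart_not_isomorphic_evenPart :
    ¬ ∃ T : evenPart → oddPart, Function.Bijective T ∧
      (∀ x y : evenPart, T (x + y) = T x + T y) ∧
      (∀ e x y : evenPart, (y : P2) = (e : P2) * (x : P2) →
        (T y : P2) = (e : P2) * (T x : P2)) := by
  rintro ⟨T, hT, -, hlin⟩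
  have h1 : (1 : P2) ∈ evenPart := Submodule.subset_span ⟨0, 0, by simp, by simp⟩
  have hr : r ∈ oddPart := Submodule.subset_span ⟨1, 0, by simp, by simp⟩
  have hs : s ∈ oddPart := Submodule.subset_span ⟨0, 1, by simp, by simp⟩
  have hdvd : ∀ q ∈ oddPart, (T ⟨1, h1⟩ : P2) ∣ q := by
    intro q hq
    obtain ⟨e, he⟩ := hT.2 ⟨q, hq⟩
    have h := hlin e ⟨1, h1⟩ e (by simp)
    rw [he] at h
    exact Dvd.intro_left (e : P2) h.symm
  have hnu : ¬ IsUnit (T ⟨1, h1⟩ : P2) := by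
    intro hu
    have h := hu.map (constantCoeff (R := ℤ) (σ := Fin 2))
    rw [constantCoeff_eq_zero_of_mem_oddPart (T ⟨1, h1⟩).2] at h
    exact not_isUnit_zero h
  have hirr : Irreducible r := (X_prime (R := ℤ) (i := (0 : Fin 2))).irreducible
  have hrs : r ∣ s := ((hirr.dvd_iff.1 (hdvd r hr)).resolve_left hnu).dvd.trans (hdvd s hs)
  -- At the point `(0, 1)` the divisibility reads `0 ∣ 1`.
  have h := map_dvd (MvPolynomial.eval ![(0 : ℤ), 1]) hrs
  simp [r, s] at h

end
end
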